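/- arXiv:1909.01516 — 4 statements merged into one kernel-verified Lean document; each statement's English description precedes it below -/
import Mathlib

section
/- Let H_L be a frustration-free local Hamiltonian on the D-dimensional lattice L = [1:n_1]×…×[1:n_D] as in the setup, with parameters g, L ≤ (3D)^D, spectral gap γ, and local gaps γ(t_1,…,t_D). Suppose 2⁶·4^D·L < t_s < n_s/5 for every s ∈ [1:D], and γ ≤ g²/16^D. Then γ(t_1, t_2, …, t_D) ≤ 6^D·γ + 200·L²·g²·6^D · (1 / min_q t_q²). -/
variable {E : Type*} [NormedAddCommGroup E] [InnerProductSpace ℂ E] [FiniteDimensional ℂ E]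

/-- An orthogonal projector: a self-adjoint idempotent operator. -/
def IsProjector (P : E →L[ℂ] E) : Prop := IsSelfAdjoint P ∧ P * P = P

/-- The smallest nonzero (for a positive semidefinite operator, smallest positive)
eigenvalue of an operator. -/
noncomputable def minNonzeroEig (A : E →L[ℂ] E) : ℝ :=
  sInf {c : ℝ | 0 < c ∧ ∃ v : E, v ≠ 0 ∧ A v = (c : ℂ) • v}

/-- The unit cells of the `D`-dimensional lattice `[1:n₁]×…×[1:n_D]` (with `0`-based site
coordinates): a cell is its lower corner `c`, subject to `c s + 1 < n s` in every
direction. -/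
def Cell (D : ℕ) (N : Fin D → ℕ) : Type :=
  {c : (s : Fin D) → Fin (N s) // ∀ s, (c s : ℕ) + 1 < N s}

noncomputable instance (D : ℕ) (N : Fin D → ℕ) : Fintype (Cell D N) := by
  unfold Cell; infer_instance

/-- The `2^D` vertices of the unit cell with lower corner `c`. -/
def cellVerts {D : ℕ} {N : Fin D → ℕ} (c : (s : Fin D) → Fin (N s)) :
    Finset ((s : Fin D) → Fin (N s)) :=
  Finset.univ.filter (fun x => ∀ s, x s = c s ∨ (x s : ℕ) = (c s : ℕ) + 1)

/-- A frustration-free local Hamiltonian `H = Σ_e P_e` on the `D`-dimensional lattice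
`[1:n₁]×…×[1:n_D]` whose joint Hilbert space is `E`: `e` ranges over the unit cells, the
`P_e` are orthogonal projectors supported on the `2^D` vertices of the cell `e`, each
failing to commute with at most `g` other members of the family, which partitions into `L`
layers of pairwise commuting projectors. -/
structure LatticeSetup (D : ℕ) (N : Fin D → ℕ) (E : Type*) [NormedAddCommGroup E]
    [InnerProductSpace ℂ E] [FiniteDimensional ℂ E] where
  /-- the projectors `P_e`, supported on the vertices of the unit cell `e` -/
  P : Cell D N → (E →L[ℂ] E)
  /-- the noncommutation degree -/
  g : ℕ
  /-- the number of layers -/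
  L : ℕ
  /-- the assignment of each projector to a layer -/
  layer : Cell D N → Fin L
  proj : ∀ e, IsProjector (P e)
  /-- operational form of locality: interactions on cells with disjoint vertex sets
  commute -/
  locality : ∀ e e' : Cell D N, Disjoint (cellVerts e.1) (cellVerts e'.1) →
    Commute (P e) (P e')
  /-- each projector fails to commute with at most `g` other members of the family -/
  gbound : ∀ e : Cell D N, Nat.card {e' : Cell D N // e' ≠ e ∧ ¬ Commute (P e) (P e')} ≤ g
  /-- projectors within each layer pairwise commute -/
  layers : ∀ e e' : Cell D N, layer e = layer e' → Commute (P e) (P e')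
  /-- frustration-freeness: there is a nonzero state annihilated by every `P_e` -/
  frustFree : ∃ v : E, v ≠ 0 ∧ ∀ e, P e v = 0

namespace LatticeSetup

variable {D : ℕ} {N : Fin D → ℕ}

/-- the full Hamiltonian `H = Σ_e P_e` -/
noncomputable def Hfull (S : LatticeSetup D N E) : E →L[ℂ] E := ∑ e, S.P e

/-- the cell `e` lies inside the hyper-rectangle with lower corner `a` and side
lengths `t` -/
def cellInRect (a t : Fin D → ℕ) (e : Cell D N) : Prop :=
  ∀ s, a s ≤ (e.1 s : ℕ) ∧ (e.1 s : ℕ) + 2 ≤ a s + t s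

instance (a t : Fin D → ℕ) : DecidablePred (fun e : Cell D N => cellInRect a t e) :=
  fun e => inferInstanceAs (Decidable (∀ s, _ ∧ _))

/-- `H_R`, the Hamiltonian restricted to the hyper-rectangle `R` with lower corner `a` and
side lengths `t`: the sum of the `P_e` over cells supported inside `R` -/
noncomputable def Hrect (S : LatticeSetup D N E) (a t : Fin D → ℕ) : E →L[ℂ] E :=
  ∑ e ∈ Finset.univ.filter (fun e : Cell D N => cellInRect a t e), S.P e

/-- the spectral gap `γ` of `H` -/
noncomputable def gap (S : LatticeSetup D N E) : ℝ := minNonzeroEig S.Hfull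

/-- the local gap `γ(t₁,…,t_D)`: the minimum of the spectral gaps of `H_R` over all
hyper-rectangular regions `R ⊆ L` of dimensions `t₁×…×t_D` -/
noncomputable def localGap (S : LatticeSetup D N E) (t : Fin D → ℕ) : ℝ :=
  sInf {x : ℝ | ∃ a : Fin D → ℕ, (∀ s, a s + t s ≤ N s) ∧
    x = minNonzeroEig (S.Hrect a t)}

end LatticeSetup

section Spectral

lemma sa_inner {A : E →L[ℂ] E} (hA : IsSelfAdjoint A) (u v : E) :
    inner ℂ (A u) v = inner ℂ u (A v) :=
  (ContinuousLinearMap.isSelfAdjoint_iff_isSymmetric.mp hA) u v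

/-- spectral decomposition in a convenient form -/
lemma spectral_data {A : E →L[ℂ] E} (hA : IsSelfAdjoint A) :
    ∃ (n : ℕ) (b : OrthonormalBasis (Fin n) ℂ E) (μ : Fin n → ℝ),
      ∀ i, A (b i) = (μ i : ℂ) • b i := by
  have hs := ContinuousLinearMap.isSelfAdjoint_iff_isSymmetric.mp hA
  refine ⟨Module.finrank ℂ E, hs.eigenvectorBasis rfl, hs.eigenvalues rfl, fun i => ?_⟩
  exact hs.apply_eigenvectorBasis rfl i

lemma spec_coord {A : E →L[ℂ] E} (hA : IsSelfAdjoint A) {n : ℕ}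
    {b : OrthonormalBasis (Fin n) ℂ E} {μ : Fin n → ℝ}
    (h : ∀ i, A (b i) = (μ i : ℂ) • b i) (v : E) (i : Fin n) :
    inner ℂ (b i) (A v) = (μ i : ℂ) * inner ℂ (b i) v := by
  rw [← sa_inner hA, h, inner_smul_left]; simp

lemma spec_energy {A : E →L[ℂ] E} (hA : IsSelfAdjoint A) {n : ℕ}
    {b : OrthonormalBasis (Fin n) ℂ E} {μ : Fin n → ℝ}
    (h : ∀ i, A (b i) = (μ i : ℂ) • b i) (v : E) :
    (inner ℂ v (A v)).re = ∑ i, μ i * ‖inner ℂ (b i) v‖ ^ 2 := by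
  rw [← b.sum_inner_mul_inner, Complex.re_sum]
  refine Finset.sum_congr rfl fun i _ => ?_
  rw [spec_coord hA h, mul_left_comm, Complex.re_ofReal_mul, ← inner_conj_symm v (b i),
    ← Complex.normSq_eq_conj_mul_self, Complex.ofReal_re, Complex.normSq_eq_norm_sq]

lemma spec_norm {A : E →L[ℂ] E} (hA : IsSelfAdjoint A) {n : ℕ}
    {b : OrthonormalBasis (Fin n) ℂ E} {μ : Fin n → ℝ}
    (h : ∀ i, A (b i) = (μ i : ℂ) • b i) (v : E) :
    ‖A v‖ ^ 2 = ∑ i, μ i ^ 2 * ‖inner ℂ (b i) v‖ ^ 2 := by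
  rw [← b.sum_sq_norm_inner_right]
  refine Finset.sum_congr rfl fun i _ => ?_
  rw [spec_coord hA h, norm_mul, mul_pow]; simp

lemma spec_nonneg {A : E →L[ℂ] E} (hpos : ∀ v, 0 ≤ (inner ℂ v (A v)).re) {n : ℕ}
    {b : OrthonormalBasis (Fin n) ℂ E} {μ : Fin n → ℝ}
    (h : ∀ i, A (b i) = (μ i : ℂ) • b i) (i : Fin n) : 0 ≤ μ i := by
  have := hpos (b i)
  rw [h, inner_smul_right, Complex.re_ofReal_mul] at this
  simpa using this

lemma minEig_bdd (A : E →L[ℂ] E) :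
    BddBelow {c : ℝ | 0 < c ∧ ∃ v : E, v ≠ 0 ∧ A v = (c : ℂ) • v} :=
  ⟨0, fun _ h => h.1.le⟩

lemma minEig_nonneg (A : E →L[ℂ] E) : 0 ≤ minNonzeroEig A :=
  Real.sInf_nonneg fun _ h => h.1.le

lemma minEig_zero : minNonzeroEig (0 : E →L[ℂ] E) = 0 := by
  unfold minNonzeroEig
  convert Real.sInf_empty
  ext c
  simp only [Set.mem_setOf_eq, Set.mem_empty_iff_false, iff_false, not_and, not_exists]
  intro hc v hv h
  have := smul_eq_zero.mp h.symm
  simp [hc.ne', hv] at this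

lemma minEig_mul_le {A : E →L[ℂ] E} (hA : IsSelfAdjoint A)
    (hpos : ∀ v, 0 ≤ (inner ℂ v (A v)).re) (v : E) :
    minNonzeroEig A * (inner ℂ v (A v)).re ≤ ‖A v‖ ^ 2 := by
  obtain ⟨n, b, μ, h⟩ := spectral_data hA
  rw [spec_energy hA h, spec_norm hA h, Finset.mul_sum]
  refine Finset.sum_le_sum fun i _ => ?_
  have h0 := spec_nonneg hpos h i
  rcases h0.eq_or_lt with h0 | h0
  · simp [← h0]
  · have : minNonzeroEig A ≤ μ i :=
      csInf_le (minEig_bdd A) ⟨h0, b i, b.orthonormal.ne_zero i, h i⟩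
    rw [← mul_assoc, sq (μ i)]
    gcongr

lemma gap_on_orth {A : E →L[ℂ] E} (hA : IsSelfAdjoint A)
    (hpos : ∀ v, 0 ≤ (inner ℂ v (A v)).re) {c : ℝ}
    (hc : ∀ v, c * (inner ℂ v (A v)).re ≤ ‖A v‖ ^ 2) (v : E)
    (hv : ∀ u, A u = 0 → inner ℂ u v = 0) :
    c * ‖v‖ ^ 2 ≤ (inner ℂ v (A v)).re := by
  obtain ⟨n, b, μ, h⟩ := spectral_data hA
  rw [spec_energy hA h, ← b.sum_sq_norm_inner_right, Finset.mul_sum]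
  refine Finset.sum_le_sum fun i _ => ?_
  have h0 := spec_nonneg hpos h i
  rcases h0.eq_or_lt with h0 | h0
  · rw [hv (b i) (by rw [h, ← h0]; simp)]; simp
  · have := hc (b i)
    rw [h, inner_smul_right, Complex.re_ofReal_mul, norm_smul] at this
    simp only [inner_self_eq_norm_sq_to_K, b.orthonormal.norm_eq_one] at this
    have : c ≤ μ i := by
      simp at this
      nlinarith
    gcongr

lemma minEig_attained {A : E →L[ℂ] E} (hA : IsSelfAdjoint A)
    (hpos : ∀ v, 0 ≤ (inner ℂ v (A v)).re) (hne : A ≠ 0) :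
    0 < minNonzeroEig A ∧ ∃ v : E, v ≠ 0 ∧ A v = (minNonzeroEig A : ℂ) • v := by
  have hfin : {c : ℝ | 0 < c ∧ ∃ v : E, v ≠ 0 ∧ A v = (c : ℂ) • v}.Finite := by
    have := Module.End.finite_hasEigenvalue (A : E →ₗ[ℂ] E)
    have := this.preimage (f := fun x : ℝ => (x : ℂ)) (Complex.ofReal_injective.injOn)
    refine this.subset ?_
    rintro c ⟨_, v, hv, h⟩
    exact Module.End.hasEigenvalue_of_hasEigenvector
      (Module.End.hasEigenvector_iff.mpr ⟨Module.End.mem_eigenspace_iff.mpr h, hv⟩)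
  have hnon : {c : ℝ | 0 < c ∧ ∃ v : E, v ≠ 0 ∧ A v = (c : ℂ) • v}.Nonempty := by
    by_contra hcon
    apply hne
    obtain ⟨n, b, μ, h⟩ := spectral_data hA
    have hz : ∀ i, μ i = 0 := by
      intro i
      by_contra hi
      exact hcon ⟨μ i, lt_of_le_of_ne (spec_nonneg hpos h i) (Ne.symm hi), b i,
        b.orthonormal.ne_zero i, h i⟩
    ext v
    have := spec_norm hA h v
    simp [hz] at this
    simpa using this
  exact hnon.csInf_mem hfin

end Spectral

section Cheb
open Polynomial

lemma cheb_lower (u : ℝ) (hu : 0 ≤ u) (n : ℕ) :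
    1 + (n : ℝ) ^ 2 * u ≤ (Chebyshev.T ℝ n).eval (1 + u) := by
  have key : ∀ n : ℕ, 1 + (n : ℝ) ^ 2 * u ≤ (Chebyshev.T ℝ n).eval (1 + u) ∧
      (2 * n + 1) * u ≤ (Chebyshev.T ℝ (n + 1)).eval (1 + u)
        - (Chebyshev.T ℝ n).eval (1 + u) := by
    intro n
    induction n with
    | zero => simp
    | succ k ih =>
      obtain ⟨h1, h2⟩ := ih
      have h3 : 1 + ((k : ℝ) + 1) ^ 2 * u ≤ (Chebyshev.T ℝ (k + 1)).eval (1 + u) := by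
        nlinarith
      have hrec := Chebyshev.T_add_two ℝ (k : ℤ)
      have e : ((k : ℤ) + 1 + 1) = k + 2 := by ring
      push_cast
      refine ⟨h3, ?_⟩
      rw [e, hrec]
      simp only [eval_sub, eval_mul, eval_ofNat, eval_X]
      have h4 : 0 ≤ ((k : ℝ) + 1) ^ 2 * u := by positivity
      nlinarith [mul_nonneg hu h4]
  exact (key n).1

/-- the amplifying polynomial -/
lemma cheb_poly (lam y : ℝ) (hl : 0 < lam) (hy : 0 ≤ y) (hly : lam * (1 + y) = 1) (m : ℕ) :
    ∃ p : ℝ[X], p.natDegree ≤ m ∧ p.eval 1 = 1 ∧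
      ∀ z, 0 ≤ z → z ≤ lam → |p.eval z| ≤ 1 / (1 + 2 * (m : ℝ) ^ 2 * y) := by
  set q : ℝ[X] := (Chebyshev.T ℝ m).comp (C (2 / lam) * X - 1) with hq
  have hq1 : 1 + 2 * (m : ℝ) ^ 2 * y ≤ q.eval 1 := by
    have := cheb_lower (2 * y) (by positivity) m
    have e : 2 / lam - 1 = 1 + 2 * y := by
      field_simp; linarith
    rw [hq]; simp only [eval_comp, eval_sub, eval_mul, eval_C, eval_X, eval_one, mul_one]
    rw [e]; linarith
  have hpos : 0 < 1 + 2 * (m : ℝ) ^ 2 * y := by positivity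
  have hq0 : 0 < q.eval 1 := lt_of_lt_of_le hpos hq1
  refine ⟨C (q.eval 1)⁻¹ * q, ?_, ?_, ?_⟩
  · refine (natDegree_C_mul_le _ _).trans ?_
    rw [hq]
    refine natDegree_comp_le.trans ?_
    rw [Chebyshev.natDegree_T]
    have : (C (2 / lam) * X - 1 : ℝ[X]).natDegree ≤ 1 := by
      compute_degree
    simpa using Nat.mul_le_mul_left m this
  · simp [hq0.ne']
  · intro z hz0 hz
    have : |q.eval z| ≤ 1 := by
      rw [hq]; simp only [eval_comp, eval_sub, eval_mul, eval_C, eval_X, eval_one]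
      apply Chebyshev.abs_eval_T_real_le_one
      have : 2 / lam * z ≤ 2 := by
        rw [div_mul_eq_mul_div, div_le_iff₀ hl]; linarith
      have : 0 ≤ 2 / lam * z := by positivity
      rw [abs_le]; constructor <;> linarith
    rw [eval_mul, eval_C, abs_mul, abs_inv, abs_of_pos hq0, one_div]
    calc (q.eval 1)⁻¹ * |q.eval z| ≤ (q.eval 1)⁻¹ * 1 := by gcongr
      _ ≤ _ := by rw [mul_one]; gcongr

/-- polynomial of an operator contracts an invariant subspace -/
lemma poly_contract {T : E →L[ℂ] E} (hT : IsSelfAdjoint T)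
    (hpos : ∀ v, 0 ≤ (inner ℂ v (T v)).re) (K : Submodule ℂ E) (lam δ : ℝ) (hδ : 0 ≤ δ)
    (hK : ∀ v ∈ K, T v ∈ K) (hbound : ∀ v ∈ K, (inner ℂ v (T v)).re ≤ lam * ‖v‖ ^ 2)
    (p : ℝ[X]) (hp : ∀ z, 0 ≤ z → z ≤ lam → |p.eval z| ≤ δ) (a : E) (ha : a ∈ K) :
    ‖aeval (T : Module.End ℂ E) (p.map Complex.ofRealHom) a‖ ≤ δ * ‖a‖ := by
  obtain ⟨n, b, μ, h⟩ := spectral_data hT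
  have hcoord : ∀ i, μ i ≤ lam ∨ inner ℂ (b i) a = 0 := by
    intro i
    by_contra hcon
    push Not at hcon
    obtain ⟨h1, h2⟩ := hcon
    apply h2
    set k := K.starProjection (b i) with hk
    have hkK : k ∈ K := K.starProjection_apply_mem _
    have hTk : T k = (μ i : ℂ) • k := by
      have hmem : b i - k ∈ Kᗮ := K.sub_starProjection_mem_orthogonal _
      have hTmem : T (b i - k) ∈ Kᗮ := by
        rw [Submodule.mem_orthogonal]
        intro u hu
        rw [← sa_inner hT]
        exact (Submodule.mem_orthogonal _ _).mp hmem _ (hK u hu)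
      have e1 : T (b i - k) - (μ i : ℂ) • (b i - k) = (μ i : ℂ) • k - T k := by
        rw [map_sub, h, smul_sub]; abel
      have hA : (μ i : ℂ) • k - T k ∈ Kᗮ := by
        rw [← e1]; exact sub_mem hTmem (Submodule.smul_mem _ _ hmem)
      have hB : (μ i : ℂ) • k - T k ∈ K := sub_mem (K.smul_mem _ hkK) (hK k hkK)
      have := (Submodule.mem_orthogonal _ _).mp hA _ hB
      rw [inner_self_eq_zero] at this
      exact (sub_eq_zero.mp this).symm
    have hb := hbound k hkK
    rw [hTk, inner_smul_right, Complex.re_ofReal_mul] at hb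
    have e2 : (inner ℂ k k).re = ‖k‖ ^ 2 := by
      rw [← @inner_self_eq_norm_sq ℂ]; rfl
    rw [e2] at hb
    have hk0 : k = 0 := by
      by_contra hne
      have : 0 < ‖k‖ ^ 2 := by positivity
      nlinarith
    have hmem : b i - k ∈ Kᗮ := K.sub_starProjection_mem_orthogonal _
    rw [hk0, sub_zero] at hmem
    exact (Submodule.mem_orthogonal' _ _).mp hmem a ha
  have hb : ∀ i, aeval (T : Module.End ℂ E) (p.map Complex.ofRealHom) (b i)
      = ((p.eval (μ i) : ℝ) : ℂ) • b i := by
    intro i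
    have hv : Module.End.HasEigenvector (T : Module.End ℂ E) (μ i : ℂ) (b i) :=
      Module.End.hasEigenvector_iff.mpr
        ⟨Module.End.mem_eigenspace_iff.mpr (h i), b.orthonormal.ne_zero i⟩
    rw [Module.End.aeval_apply_of_hasEigenvector hv]
    congr 1
    have := Polynomial.eval_map_apply (f := Complex.ofRealHom) (p := p) (μ i)
    simpa using this
  set Q := aeval (T : Module.End ℂ E) (p.map Complex.ofRealHom) with hQ
  have hQa : Q a = ∑ i, (((p.eval (μ i) : ℝ) : ℂ) * inner ℂ (b i) a) • b i := by
    conv_lhs => rw [← b.sum_repr' a]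
    rw [map_sum]
    refine Finset.sum_congr rfl fun i _ => ?_
    rw [map_smul, hb, smul_smul, mul_comm]
  have hcQ : ∀ i, inner ℂ (b i) (Q a) = ((p.eval (μ i) : ℝ) : ℂ) * inner ℂ (b i) a := by
    intro i
    rw [hQa]
    exact b.orthonormal.inner_right_fintype _ i
  have : ‖Q a‖ ^ 2 ≤ (δ * ‖a‖) ^ 2 := by
    rw [mul_pow, ← b.sum_sq_norm_inner_right, ← b.sum_sq_norm_inner_right, Finset.mul_sum]
    refine Finset.sum_le_sum fun i _ => ?_
    rw [hcQ, norm_mul, mul_pow]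
    rcases hcoord i with h1 | h1
    · have := hp (μ i) (spec_nonneg hpos h i) h1
      have e : ‖((p.eval (μ i) : ℝ) : ℂ)‖ = |p.eval (μ i)| := by simp
      rw [e]
      gcongr
    · rw [h1]; simp
  exact (pow_le_pow_iff_left₀ (norm_nonneg _) (by positivity) two_ne_zero).mp this

end Cheb

section DL
open Classical

variable {ι : Type*}

lemma proj_inner {P : E →L[ℂ] E} (hP : IsProjector P) (v : E) :
    (inner ℂ v (P v)).re = ‖P v‖ ^ 2 := by
  have h : P (P v) = P v := by
    conv_rhs => rw [← hP.2]
    rfl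
  rw [← h, ← sa_inner hP.1, h, ← @inner_self_eq_norm_sq ℂ]; rfl

lemma proj_idem {P : E →L[ℂ] E} (hP : IsProjector P) (v : E) : P (P v) = P v := by
  conv_rhs => rw [← hP.2]
  rfl

lemma proj_norm_le {P : E →L[ℂ] E} (hP : IsProjector P) (v : E) :
    ‖v - P v‖ ^ 2 = ‖v‖ ^ 2 - ‖P v‖ ^ 2 := by
  rw [@norm_sub_sq ℂ]
  have : RCLike.re (inner ℂ v (P v)) = ‖P v‖ ^ 2 := proj_inner hP v
  rw [this]; ring

lemma proj_contr {P : E →L[ℂ] E} (hP : IsProjector P) (v : E) : ‖P v‖ ≤ ‖v‖ := by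
  have h := proj_norm_le hP v
  have : 0 ≤ ‖v - P v‖ ^ 2 := by positivity
  exact (pow_le_pow_iff_left₀ (norm_nonneg _) (norm_nonneg _) two_ne_zero).mp (by linarith)

/-- ordered product of the `1 - P_e` along a list -/
noncomputable def lpr (P : ι → E →L[ℂ] E) (l : List ι) : E →L[ℂ] E :=
  (l.map (fun e => 1 - P e)).prod

lemma lpr_cons (P : ι → E →L[ℂ] E) (e : ι) (l : List ι) (v : E) :
    lpr P (e :: l) v = lpr P l v - P e (lpr P l v) := by
  simp [lpr]

lemma lpr_append (P : ι → E →L[ℂ] E) (l l' : List ι) (v : E) :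
    lpr P (l ++ l') v = lpr P l (lpr P l' v) := by
  simp [lpr]

lemma lpr_inner {P : ι → E →L[ℂ] E} (hP : ∀ e, IsProjector (P e)) (l : List ι) (u v : E) :
    inner ℂ (lpr P l u) v = inner ℂ u (lpr P l.reverse v) := by
  induction l generalizing u v with
  | nil => simp [lpr]
  | cons e l ih =>
    rw [List.reverse_cons, lpr_append, ← ih, lpr_cons, inner_sub_left, sa_inner (hP e).1,
      lpr_cons, inner_sub_right]
    simp [lpr]

lemma lpr_fix {P : ι → E →L[ℂ] E} (l : List ι) (v : E) (h : ∀ e ∈ l, P e v = 0) :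
    lpr P l v = v := by
  induction l with
  | nil => simp [lpr]
  | cons e l ih =>
    rw [lpr_cons, ih (fun e' he' => h e' (List.mem_cons_of_mem _ he')), h e (by simp), sub_zero]

lemma dl_data {P : ι → E →L[ℂ] E} (hP : ∀ e, IsProjector (P e)) (l : List ι) (hl : l.Nodup)
    (v : E) : ∃ d : ι → ℝ, (∀ j, 0 ≤ d j) ∧
      ∑ j ∈ l.toFinset, d j ^ 2 = ‖v‖ ^ 2 - ‖lpr P l v‖ ^ 2 ∧
      ∀ i ∈ l, ‖P i (lpr P l v)‖ ≤
        ∑ j ∈ l.toFinset.filter (fun j => ¬ Commute (P i) (P j)), d j := by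
  induction l with
  | nil => exact ⟨fun _ => 0, by simp [lpr]⟩
  | cons e l ih =>
    obtain ⟨hel, hl'⟩ := List.nodup_cons.mp hl
    obtain ⟨d, h0, h1, h2⟩ := ih hl'
    have hel' : e ∉ l.toFinset := by simpa using hel
    set u := lpr P l v with hu
    refine ⟨Function.update d e ‖P e u‖, ?_, ?_, ?_⟩
    · intro j
      by_cases h : j = e
      · subst h; simp
      · simp [h, h0]
    · rw [List.toFinset_cons, Finset.sum_insert hel', Function.update_self, lpr_cons,
        proj_norm_le (hP e)]
      rw [Finset.sum_congr rfl (g := fun j => d j ^ 2), h1]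
      · ring
      · intro j hj
        have : j ≠ e := by rintro rfl; exact hel' hj
        simp [this]
    · have hup : ∀ i, ∑ j ∈ l.toFinset.filter (fun j => ¬ Commute (P i) (P j)),
          Function.update d e ‖P e u‖ j =
          ∑ j ∈ l.toFinset.filter (fun j => ¬ Commute (P i) (P j)), d j := by
        intro i
        refine Finset.sum_congr rfl fun j hj => ?_
        have : j ≠ e := by rintro rfl; exact hel' (Finset.mem_filter.mp hj).1
        simp [this]
      intro i hi
      rw [lpr_cons, ← hu, List.toFinset_cons, Finset.filter_insert]
      rcases List.mem_cons.mp hi with rfl | hi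
      · rw [map_sub, proj_idem (hP i), sub_self, norm_zero]
        rw [if_neg (by simp), hup]
        exact Finset.sum_nonneg fun j _ => h0 j
      · by_cases hc : ¬ Commute (P i) (P e)
        · rw [if_pos hc, Finset.sum_insert (by simp [hel]), hup, Function.update_self, map_sub]
          have := norm_sub_le (P i u) (P i (P e u))
          have := proj_contr (hP i) (P e u)
          linarith [h2 i hi]
        · rw [if_neg hc, hup]
          push Not at hc
          have e1 : P i (P e u) = P e (P i u) := by
            have := congrArg (fun A : E →L[ℂ] E => A u) hc.eq
            simpa using this
          have e2 : ‖P i u - P e (P i u)‖ ≤ ‖P i u‖ := by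
            have h := proj_norm_le (hP e) (P i u)
            have : 0 ≤ ‖P e (P i u)‖ ^ 2 := by positivity
            exact (pow_le_pow_iff_left₀ (norm_nonneg _) (norm_nonneg _) two_ne_zero).mp
              (by linarith)
          rw [map_sub, e1]
          exact e2.trans (h2 i hi)

lemma dl_energy {P : ι → E →L[ℂ] E} (hP : ∀ e, IsProjector (P e)) (F : Finset ι) (g : ℕ)
    (hg : ∀ i ∈ F, (F.filter (fun j => ¬ Commute (P i) (P j))).card ≤ g)
    (l : List ι) (hl : l.Nodup) (hlF : l.toFinset = F) (v : E) :
    ∑ i ∈ F, ‖P i (lpr P l v)‖ ^ 2 ≤ (g : ℝ) ^ 2 * (‖v‖ ^ 2 - ‖lpr P l v‖ ^ 2) := by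
  obtain ⟨d, h0, h1, h2⟩ := dl_data hP l hl v
  rw [hlF] at h1 h2
  calc ∑ i ∈ F, ‖P i (lpr P l v)‖ ^ 2
      ≤ ∑ i ∈ F, (g : ℝ) * ∑ j ∈ F.filter (fun j => ¬ Commute (P i) (P j)), d j ^ 2 := by
        refine Finset.sum_le_sum fun i hi => ?_
        have hi' : i ∈ l := by rw [← hlF] at hi; simpa using hi
        calc ‖P i (lpr P l v)‖ ^ 2
            ≤ (∑ j ∈ F.filter (fun j => ¬ Commute (P i) (P j)), d j) ^ 2 := by
              gcongr; exact h2 i hi'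
          _ ≤ ((F.filter (fun j => ¬ Commute (P i) (P j))).card : ℝ) *
              ∑ j ∈ F.filter (fun j => ¬ Commute (P i) (P j)), d j ^ 2 :=
              sq_sum_le_card_mul_sum_sq
          _ ≤ _ := by
              have : ((F.filter (fun j => ¬ Commute (P i) (P j))).card : ℝ) ≤ g := by
                exact_mod_cast hg i hi
              gcongr
    _ = (g : ℝ) * ∑ j ∈ F, ((F.filter (fun i => ¬ Commute (P j) (P i))).card : ℝ) * d j ^ 2 := by
        rw [← Finset.mul_sum]
        congr 1
        simp only [Finset.sum_filter]
        rw [Finset.sum_comm]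
        refine Finset.sum_congr rfl fun j _ => ?_
        rw [← Finset.sum_filter, Finset.sum_const, nsmul_eq_mul]
        congr 3
        ext i
        simp only [Finset.mem_filter, Commute.symm_iff (a := P i)]
    _ ≤ (g : ℝ) * ∑ j ∈ F, (g : ℝ) * d j ^ 2 := by
        gcongr with j hj
        exact_mod_cast hg j hj
    _ = _ := by rw [← Finset.mul_sum, h1]; ring

lemma sum_sa {P : ι → E →L[ℂ] E} (hP : ∀ e, IsProjector (P e)) (F : Finset ι) :
    IsSelfAdjoint (∑ e ∈ F, P e) := by
  induction F using Finset.induction_on with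
  | empty => simp
  | insert a s ha ih => rw [Finset.sum_insert ha]; exact (hP a).1.add ih

lemma sum_energy {P : ι → E →L[ℂ] E} (hP : ∀ e, IsProjector (P e)) (F : Finset ι) (v : E) :
    (inner ℂ v ((∑ e ∈ F, P e) v)).re = ∑ e ∈ F, ‖P e v‖ ^ 2 := by
  rw [sum_apply, inner_sum, Complex.re_sum]
  exact Finset.sum_congr rfl fun e _ => proj_inner (hP e) v

lemma sum_pos' {P : ι → E →L[ℂ] E} (hP : ∀ e, IsProjector (P e)) (F : Finset ι) (v : E) :
    0 ≤ (inner ℂ v ((∑ e ∈ F, P e) v)).re := by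
  rw [sum_energy hP]; positivity

lemma sum_ker {P : ι → E →L[ℂ] E} (hP : ∀ e, IsProjector (P e)) (F : Finset ι) (v : E) :
    (∑ e ∈ F, P e) v = 0 ↔ ∀ e ∈ F, P e v = 0 := by
  constructor
  · intro h e he
    have := sum_energy hP F v
    rw [h, inner_zero_right, Complex.zero_re] at this
    have := (Finset.sum_eq_zero_iff_of_nonneg (fun e _ => by positivity)).mp this.symm e he
    simpa using this
  · intro h
    rw [sum_apply]
    exact Finset.sum_eq_zero h

/-- gap of a sum of commuting groups -/
lemma group_gap {P : ι → E →L[ℂ] E} (hP : ∀ e, IsProjector (P e)) {κ : Type*} (I : Finset κ)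
    (B : κ → Finset ι)
    (hcomm : ∀ i ∈ I, ∀ j ∈ I, i ≠ j → ∀ e ∈ B i, ∀ f ∈ B j, Commute (P e) (P f)) (c : ℝ)
    (hc : ∀ i ∈ I, ∀ v, c * (inner ℂ v ((∑ e ∈ B i, P e) v)).re ≤ ‖(∑ e ∈ B i, P e) v‖ ^ 2)
    (v : E) :
    c * (inner ℂ v ((∑ i ∈ I, ∑ e ∈ B i, P e) v)).re ≤ ‖(∑ i ∈ I, ∑ e ∈ B i, P e) v‖ ^ 2 := by
  set A : κ → E →L[ℂ] E := fun i => ∑ e ∈ B i, P e with hA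
  have hcross : ∀ i ∈ I, ∀ j ∈ I, i ≠ j → 0 ≤ (inner ℂ (A i v) (A j v)).re := by
    intro i hi j hj hij
    simp only [hA, sum_apply, sum_inner, inner_sum, Complex.re_sum]
    refine Finset.sum_nonneg fun e he => Finset.sum_nonneg fun f hf => ?_
    have hcm := hcomm i hi j hj hij f hf e he
    have key : inner ℂ (P f v) (P e v) = inner ℂ (P f (P e v)) (P f (P e v)) := by
      have e1 : P f (P e v) = P e (P f v) := by
        have := congrArg (fun A : E →L[ℂ] E => A v) hcm.eq
        simpa using this
      have r1 : inner ℂ (P f (P e v)) (P f (P e v)) = inner ℂ v (P f (P e v)) := by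
        rw [sa_inner (hP f).1, proj_idem (hP f), e1, sa_inner (hP e).1, proj_idem (hP e)]
      rw [r1, sa_inner (hP f).1]
    rw [key]
    have := @inner_self_nonneg ℂ E _ _ _ (P f (P e v))
    exact this
  have hsq : ‖(∑ i ∈ I, A i) v‖ ^ 2 = ∑ i ∈ I, ∑ j ∈ I, (inner ℂ (A i v) (A j v)).re := by
    rw [← @inner_self_eq_norm_sq ℂ, sum_apply, sum_inner]
    simp only [inner_sum]
    show Complex.re _ = _
    simp only [Complex.re_sum]
  rw [hsq, sum_apply, inner_sum, Complex.re_sum, Finset.mul_sum]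
  refine Finset.sum_le_sum fun i hi => ?_
  refine (hc i hi v).trans ?_
  have e2 : ‖A i v‖ ^ 2 = (inner ℂ (A i v) (A i v)).re := by
    rw [← @inner_self_eq_norm_sq ℂ]; rfl
  show ‖A i v‖ ^ 2 ≤ _
  rw [e2]
  refine Finset.single_le_sum (f := fun j => (inner ℂ (A i v) (A j v)).re) (fun j hj => ?_) hi
  by_cases hij : i = j
  · subst hij; rw [← e2]; positivity
  · exact hcross i hi j hj hij

end DL

section Cone
open Classical Polynomial

variable {ι : Type*}

/-- `x e'` is within distance `τ` of some cell of `F` outside `X` -/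
def nearOut (F : Finset ι) (x : ι → ℕ) (X : ι → Prop) (τ : ℕ) (e' : ι) : Prop :=
  ∃ e ∈ F, ¬ X e ∧ x e ≤ x e' + τ ∧ x e' ≤ x e + τ

/-- vectors obtained from `a` by applying operators in the light cone -/
def Reach (P : ι → E →L[ℂ] E) (F : Finset ι) (x : ι → ℕ) (X : ι → Prop) (a : E) (τ : ℕ)
    (u : E) : Prop :=
  ∃ l : List ι, (∀ e ∈ l, e ∈ F ∧ nearOut F x X τ e) ∧ u = lpr P l a

lemma lpr_comm {P : ι → E →L[ℂ] E} (l : List ι) (A : E →L[ℂ] E)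
    (h : ∀ e ∈ l, Commute A (P e)) (v : E) : A (lpr P l v) = lpr P l (A v) := by
  induction l generalizing v with
  | nil => simp [lpr]
  | cons e l ih =>
    have hc := h e (by simp)
    have e1 : ∀ w, A (P e w) = P e (A w) := by
      intro w
      have := congrArg (fun A : E →L[ℂ] E => A w) hc.eq
      simpa using this
    rw [lpr_cons, lpr_cons, map_sub, e1, ih (fun e' he' => h e' (List.mem_cons_of_mem _ he'))]

lemma reach_layer {P : ι → E →L[ℂ] E} {F : Finset ι} {x : ι → ℕ} {X : ι → Prop} {a : E}
    (hloc : ∀ e ∈ F, ∀ e' ∈ F, ¬ (x e ≤ x e' + 1 ∧ x e' ≤ x e + 1) → Commute (P e) (P e'))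
    (ha : ∀ e ∈ F, X e → P e a = 0) {τ : ℕ} {u : E} (hu : Reach P F x X a τ u)
    (l : List ι) (hl : ∀ e ∈ l, e ∈ F) (hlay : ∀ e ∈ l, ∀ e' ∈ l, Commute (P e) (P e')) :
    Reach P F x X a (τ + 1) (lpr P l u) := by
  obtain ⟨b, hb, rfl⟩ := hu
  have key : ∃ c : List ι, (∀ e ∈ c, e ∈ l ∧ nearOut F x X (τ + 1) e) ∧
      lpr P l (lpr P b a) = lpr P c (lpr P b a) := by
    induction l with
    | nil => exact ⟨[], by simp⟩
    | cons e l ih =>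
      obtain ⟨c, hc, h⟩ := ih (fun e' he' => hl e' (List.mem_cons_of_mem _ he'))
        (fun e' he' e'' he'' => hlay e' (List.mem_cons_of_mem _ he') e''
          (List.mem_cons_of_mem _ he''))
      by_cases hn : nearOut F x X (τ + 1) e
      · refine ⟨e :: c, ?_, ?_⟩
        · intro e' he'
          rcases List.mem_cons.mp he' with rfl | he'
          · exact ⟨by simp, hn⟩
          · exact ⟨List.mem_cons_of_mem _ (hc e' he').1, (hc e' he').2⟩
        · rw [lpr_cons, lpr_cons, h]
      · refine ⟨c, fun e' he' => ⟨List.mem_cons_of_mem _ (hc e' he').1, (hc e' he').2⟩, ?_⟩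
        have heF := hl e (by simp)
        rw [lpr_cons, h, lpr_comm c (P e)
          (fun e' he' => hlay e (by simp) e' (List.mem_cons_of_mem _ (hc e' he').1)),
          lpr_comm b (P e)]
        · have hX : X e := by
            by_contra hX
            exact hn ⟨e, heF, hX, by omega, by omega⟩
          rw [ha e heF hX]; simp
        · intro e' he'
          obtain ⟨hF', f, hf, hXf, h1, h2⟩ := hb e' he'
          apply hloc e heF e' hF'
          rintro ⟨h3, h4⟩
          exact hn ⟨f, hf, hXf, by omega, by omega⟩
  obtain ⟨c, hc, h⟩ := key
  refine ⟨c ++ b, ?_, ?_⟩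
  · intro e he
    rcases List.mem_append.mp he with he | he
    · exact ⟨hl e (hc e he).1, (hc e he).2⟩
    · obtain ⟨hF', f, hf, hXf, h1, h2⟩ := hb e he
      exact ⟨hF', f, hf, hXf, by omega, by omega⟩
  · rw [h, lpr_append]

lemma reach_layers {P : ι → E →L[ℂ] E} {F : Finset ι} {x : ι → ℕ} {X : ι → Prop} {a : E}
    (hloc : ∀ e ∈ F, ∀ e' ∈ F, ¬ (x e ≤ x e' + 1 ∧ x e' ≤ x e + 1) → Commute (P e) (P e'))
    (ha : ∀ e ∈ F, X e → P e a = 0) {τ : ℕ} {u : E} (hu : Reach P F x X a τ u)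
    (Ls : List (List ι)) (hl : ∀ l ∈ Ls, ∀ e ∈ l, e ∈ F)
    (hlay : ∀ l ∈ Ls, ∀ e ∈ l, ∀ e' ∈ l, Commute (P e) (P e')) :
    Reach P F x X a (τ + Ls.length) (lpr P Ls.flatten u) := by
  induction Ls with
  | nil => simpa [lpr] using hu
  | cons l Ls ih =>
    have := ih (fun l' h' => hl l' (List.mem_cons_of_mem _ h'))
      (fun l' h' => hlay l' (List.mem_cons_of_mem _ h'))
    rw [List.flatten_cons, lpr_append, List.length_cons, ← add_assoc]
    exact reach_layer hloc ha this l (hl l (by simp)) (hlay l (by simp))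

lemma abs_step {P : ι → E →L[ℂ] E} (hP : ∀ e, IsProjector (P e)) (F : Finset ι)
    (x : ι → ℕ) (X1 X2 : ι → Prop) (g L m : ℕ) (hgpos : 0 < g) (hm : 0 < m)
    (layer : ι → Fin L)
    (hlayer : ∀ e e', layer e = layer e' → Commute (P e) (P e'))
    (hg : ∀ i ∈ F, (F.filter (fun j => ¬ Commute (P i) (P j))).card ≤ g)
    (hloc : ∀ e ∈ F, ∀ e' ∈ F, ¬ (x e ≤ x e' + 1 ∧ x e' ≤ x e + 1) → Commute (P e) (P e'))
    (hX : ∀ e ∈ F, nearOut F x X1 (2 * L * m) e → X2 e)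
    (c : ℝ)
    (h1 : ∀ v, c * (inner ℂ v ((∑ e ∈ F.filter X1, P e) v)).re
      ≤ ‖(∑ e ∈ F.filter X1, P e) v‖ ^ 2)
    (h2 : ∀ v, c * (inner ℂ v ((∑ e ∈ F.filter X2, P e) v)).re
      ≤ ‖(∑ e ∈ F.filter X2, P e) v‖ ^ 2)
    (hne : (∑ e ∈ F, P e) ≠ 0) :
    c ≤ 2 * minNonzeroEig (∑ e ∈ F, P e) + (g : ℝ) ^ 2 / (m : ℝ) ^ 2 := by
  set H := ∑ e ∈ F, P e with hH
  have hHsa : IsSelfAdjoint H := sum_sa hP F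
  have hHpos : ∀ v, 0 ≤ (inner ℂ v (H v)).re := sum_pos' hP F
  obtain ⟨hγ, v, hv0, hv⟩ := minEig_attained hHsa hHpos hne
  set γ := minNonzeroEig H with hγdef
  -- the layers
  set Ls : List (List ι) := (List.finRange L).map
    (fun k => (F.filter (fun e => layer e = k)).toList) with hLs
  have hLslen : Ls.length = L := by simp [hLs]
  have hLsF : ∀ l ∈ Ls, ∀ e ∈ l, e ∈ F := by
    intro l hl e he
    obtain ⟨k, -, rfl⟩ := List.mem_map.mp hl
    exact (Finset.mem_filter.mp (Finset.mem_toList.mp he)).1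
  have hLslay : ∀ l ∈ Ls, ∀ e ∈ l, ∀ e' ∈ l, Commute (P e) (P e') := by
    intro l hl e he e' he'
    obtain ⟨k, -, rfl⟩ := List.mem_map.mp hl
    exact hlayer e e' ((Finset.mem_filter.mp (Finset.mem_toList.mp he)).2.trans
      (Finset.mem_filter.mp (Finset.mem_toList.mp he')).2.symm)
  set l := Ls.flatten with hl
  have hlnodup : l.Nodup := by
    rw [hl, List.nodup_flatten]
    constructor
    · intro l' hl'
      obtain ⟨k, -, rfl⟩ := List.mem_map.mp hl'
      exact Finset.nodup_toList _
    · rw [hLs, List.pairwise_map]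
      refine (List.nodup_finRange L).imp ?_
      intro k k' hkk e he he'
      have e1 := (Finset.mem_filter.mp (Finset.mem_toList.mp he)).2
      have e2 := (Finset.mem_filter.mp (Finset.mem_toList.mp he')).2
      exact hkk (e1.symm.trans e2)
  have hlF : l.toFinset = F := by
    ext e
    simp [hl, hLs]
  have hmemF : ∀ e ∈ l, e ∈ F := by
    intro e he; rw [← hlF]; simpa using he
  -- T
  set T : E →L[ℂ] E := lpr P l.reverse * lpr P l with hT
  have hTapp : ∀ u, T u = lpr P l.reverse (lpr P l u) := fun u => rfl
  have hTin : ∀ u w, inner ℂ u (T w) = inner ℂ (lpr P l u) (lpr P l w) := by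
    intro u w; rw [hTapp, lpr_inner hP]
  have hTsa : IsSelfAdjoint T := by
    rw [ContinuousLinearMap.isSelfAdjoint_iff_isSymmetric]
    intro u w
    show inner ℂ (T u) w = inner ℂ u (T w)
    rw [hTin, ← inner_conj_symm, hTin, inner_conj_symm]
  have hTen : ∀ u, (inner ℂ u (T u)).re = ‖lpr P l u‖ ^ 2 := by
    intro u; rw [hTin, ← @inner_self_eq_norm_sq ℂ]; rfl
  have hTpos : ∀ u, 0 ≤ (inner ℂ u (T u)).re := by
    intro u; rw [hTen]; positivity
  set K : Submodule ℂ E := (LinearMap.ker (H : E →ₗ[ℂ] E))ᗮ with hK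
  have hKmem : ∀ w, w ∈ K ↔ ∀ u, H u = 0 → inner ℂ u w = 0 := by
    intro w
    rw [hK, Submodule.mem_orthogonal]
    rfl
  have hlK : ∀ l' : List ι, (∀ e ∈ l', e ∈ F) → ∀ w ∈ K, lpr P l' w ∈ K := by
    intro l' hl' w hw
    rw [hKmem] at hw ⊢
    intro u hu
    have := lpr_inner hP l'.reverse u w
    rw [List.reverse_reverse] at this
    rw [← this, lpr_fix]
    · exact hw u hu
    · intro e he
      exact (sum_ker hP F u).mp hu e (hl' e (by simpa using he))
  have hTK : ∀ w ∈ K, T w ∈ K := by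
    intro w hw
    rw [hTapp]
    refine hlK _ (fun e he => hmemF e (by simpa using he)) _ (hlK _ hmemF _ hw)
  have hgR : (0 : ℝ) < g := by exact_mod_cast hgpos
  have hmR : (0 : ℝ) < m := by exact_mod_cast hm
  set y : ℝ := γ / (g : ℝ) ^ 2 with hy
  have hypos : 0 < y := by positivity
  have hTb : ∀ w ∈ K, (inner ℂ w (T w)).re ≤ (1 / (1 + y)) * ‖w‖ ^ 2 := by
    intro w hw
    rw [hTen]
    have ha := dl_energy hP F g hg l hlnodup hlF w
    rw [← sum_energy hP F] at ha
    have hb := gap_on_orth hHsa hHpos (minEig_mul_le hHsa hHpos) _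
      ((hKmem _).mp (hlK _ hmemF _ hw))
    have hc := hb.trans ha
    rw [one_div_mul_eq_div, le_div_iff₀ (by positivity)]
    have : γ = y * (g : ℝ) ^ 2 := by rw [hy]; field_simp
    have hc' : γ * ‖lpr P l w‖ ^ 2 ≤ (g : ℝ) ^ 2 * (‖w‖ ^ 2 - ‖lpr P l w‖ ^ 2) := hc
    rw [this] at hc'
    have hg2 : (0 : ℝ) < (g : ℝ) ^ 2 := by positivity
    have : (g : ℝ) ^ 2 * (‖lpr P l w‖ ^ 2 * (1 + y)) ≤ (g : ℝ) ^ 2 * ‖w‖ ^ 2 := by linarith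
    exact le_of_mul_le_mul_left this hg2
  -- polynomial
  obtain ⟨p, hpdeg, hp1, hpb⟩ := cheb_poly (1 / (1 + y)) y (by positivity) hypos.le
    (by field_simp) m
  set δ : ℝ := 1 / (1 + 2 * (m : ℝ) ^ 2 * y) with hδ
  have hδ0 : 0 ≤ δ := by positivity
  -- a and b
  set U1 := LinearMap.ker ((∑ e ∈ F.filter X1, P e : E →L[ℂ] E) : E →ₗ[ℂ] E) with hU1
  set U2 := LinearMap.ker ((∑ e ∈ F.filter X2, P e : E →L[ℂ] E) : E →ₗ[ℂ] E) with hU2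
  set a := U1.starProjection v with ha
  set b := U2.starProjection v with hb
  have haker : ∀ e ∈ F, X1 e → P e a = 0 := by
    intro e he hx
    have : a ∈ U1 := U1.starProjection_apply_mem v
    exact (sum_ker hP _ a).mp this e (Finset.mem_filter.mpr ⟨he, hx⟩)
  have hbker : ∀ e ∈ F, X2 e → P e b = 0 := by
    intro e he hx
    have : b ∈ U2 := U2.starProjection_apply_mem v
    exact (sum_ker hP _ b).mp this e (Finset.mem_filter.mpr ⟨he, hx⟩)
  have hvK : v ∈ K := by
    rw [hKmem]
    intro u hu
    have : inner ℂ u (H v) = 0 := by rw [← sa_inner hHsa, hu, inner_zero_left]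
    rw [hv, inner_smul_right] at this
    rcases mul_eq_zero.mp this with h | h
    · exact absurd (by exact_mod_cast h) hγ.ne'
    · exact h
  have haK : a ∈ K := by
    rw [hKmem]
    intro u hu
    have huU : u ∈ U1 := by
      refine (sum_ker hP _ u).mpr fun e he => ?_
      exact (sum_ker hP F u).mp hu e (Finset.mem_filter.mp he).1
    rw [ha, ← Submodule.inner_starProjection_left_eq_right,
      Submodule.starProjection_eq_self_iff.mpr huU]
    exact (hKmem v).mp hvK u hu
  -- light cone
  have hreach : ∀ j : ℕ, Reach P F x X1 a (2 * L * j) ((T ^ j) a) := by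
    intro j
    induction j with
    | zero => exact ⟨[], by simp [lpr]⟩
    | succ j ih =>
      have r1 := reach_layers hloc haker ih Ls hLsF hLslay
      have r2 := reach_layers hloc haker r1 (Ls.map List.reverse).reverse
        (by
          intro l' hl' e he
          simp only [List.mem_reverse, List.mem_map] at hl'
          obtain ⟨l'', h'', rfl⟩ := hl'
          exact hLsF l'' h'' e (by simpa using he))
        (by
          intro l' hl' e he e' he'
          simp only [List.mem_reverse, List.mem_map] at hl'
          obtain ⟨l'', h'', rfl⟩ := hl'
          exact hLslay l'' h'' e (by simpa using he) e' (by simpa using he'))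
      rw [← List.reverse_flatten] at r2
      have e1 : (T ^ (j + 1)) a = lpr P Ls.flatten.reverse (lpr P Ls.flatten ((T ^ j) a)) := by
        rw [pow_succ']; rfl
      have e2 : 2 * L * (j + 1) = 2 * L * j + Ls.length + (Ls.map List.reverse).reverse.length := by
        simp only [List.length_reverse, List.length_map, hLslen]; ring
      rw [e1, e2]
      exact r2
  have hbT : ∀ j ≤ m, inner ℂ b ((T ^ j) a) = inner ℂ b a := by
    intro j hj
    obtain ⟨c, hc, hca⟩ := hreach j
    rw [hca]
    have := lpr_inner hP c.reverse b a
    rw [List.reverse_reverse] at this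
    rw [← this, lpr_fix]
    intro e he
    obtain ⟨hF', f, hf, hXf, h3, h4⟩ := hc e (by simpa using he)
    have hmono : 2 * L * j ≤ 2 * L * m := Nat.mul_le_mul_left _ hj
    exact hbker e hF' (hX e hF' ⟨f, hf, hXf, by omega, by omega⟩)
  have hbp : inner ℂ b (aeval (T : Module.End ℂ E) (p.map Complex.ofRealHom) a)
      = inner ℂ b a := by
    have hdeg : (p.map Complex.ofRealHom).natDegree < m + 1 :=
      Nat.lt_succ_of_le (natDegree_map_le.trans hpdeg)
    rw [aeval_eq_sum_range' hdeg, LinearMap.sum_apply, inner_sum]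
    have e1 : ∀ j ∈ Finset.range (m + 1), inner ℂ b
        (((p.map Complex.ofRealHom).coeff j • (T : Module.End ℂ E) ^ j) a)
        = (p.map Complex.ofRealHom).coeff j * inner ℂ b a := by
      intro j hj
      rw [LinearMap.smul_apply, inner_smul_right]
      congr 1
      have e3 : ((T : Module.End ℂ E) ^ j) a = (T ^ j) a := by
        rw [← ContinuousLinearMap.coe_pow]; rfl
      rw [e3]
      exact hbT j (by simpa [Nat.lt_succ_iff] using hj)
    rw [Finset.sum_congr rfl e1, ← Finset.sum_mul]
    have e2 : ∑ j ∈ Finset.range (m + 1), (p.map Complex.ofRealHom).coeff j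
        = (p.map Complex.ofRealHom).eval 1 := by
      rw [eval_eq_sum_range' hdeg]; simp
    rw [e2]
    have := Polynomial.eval_map_apply (f := Complex.ofRealHom) (p := p) 1
    rw [map_one, hp1, map_one] at this
    rw [this, one_mul]
  have hab : (inner ℂ b a).re ≤ δ * ‖a‖ * ‖b‖ := by
    have h3 := poly_contract hTsa hTpos K (1 / (1 + y)) δ hδ0 hTK hTb p hpb a haK
    rw [← hbp]
    calc _ ≤ ‖inner ℂ b (aeval (T : Module.End ℂ E) (p.map Complex.ofRealHom) a)‖ :=
          Complex.re_le_norm _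
      _ ≤ ‖b‖ * ‖aeval (T : Module.End ℂ E) (p.map Complex.ofRealHom) a‖ := norm_inner_le_norm _ _
      _ ≤ ‖b‖ * (δ * ‖a‖) := by gcongr
      _ = _ := by ring
  -- geometry
  have hav : (inner ℂ v a).re = ‖a‖ ^ 2 := by
    have := U1.re_inner_starProjection_eq_normSq v
    rw [← inner_conj_symm, Complex.conj_re]; exact this
  have hbv : (inner ℂ v b).re = ‖b‖ ^ 2 := by
    have := U2.re_inner_starProjection_eq_normSq v
    rw [← inner_conj_symm, Complex.conj_re]; exact this
  have hva : ‖v - a‖ ^ 2 = ‖v‖ ^ 2 - ‖a‖ ^ 2 := by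
    rw [@norm_sub_sq ℂ]
    have : RCLike.re (inner ℂ v a) = ‖a‖ ^ 2 := hav
    rw [this]; ring
  have hvb : ‖v - b‖ ^ 2 = ‖v‖ ^ 2 - ‖b‖ ^ 2 := by
    rw [@norm_sub_sq ℂ]
    have : RCLike.re (inner ℂ v b) = ‖b‖ ^ 2 := hbv
    rw [this]; ring
  have hs : ‖a‖ ^ 2 + ‖b‖ ^ 2 ≤ (1 + δ) * ‖v‖ ^ 2 := by
    set s := ‖a‖ ^ 2 + ‖b‖ ^ 2 with hs
    have i1 : s ≤ ‖v‖ * ‖a + b‖ := by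
      have : (inner ℂ v (a + b)).re = s := by
        rw [inner_add_right, Complex.add_re, hav, hbv]
      rw [← this]
      exact (Complex.re_le_norm _).trans (norm_inner_le_norm _ _)
    have i2 : ‖a + b‖ ^ 2 ≤ (1 + δ) * s := by
      rw [@norm_add_sq ℂ]
      have : RCLike.re (inner ℂ a b) = (inner ℂ b a).re := by
        rw [← inner_conj_symm]; exact Complex.conj_re _
      rw [this]
      nlinarith [mul_nonneg hδ0 (sq_nonneg (‖a‖ - ‖b‖))]
    have hs0 : 0 ≤ s := by positivity
    rcases hs0.eq_or_lt with h | h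
    · rw [← h]; positivity
    · have i3 : s ^ 2 ≤ ‖v‖ ^ 2 * ((1 + δ) * s) := by
        calc s ^ 2 ≤ (‖v‖ * ‖a + b‖) ^ 2 := by gcongr
          _ = ‖v‖ ^ 2 * ‖a + b‖ ^ 2 := by ring
          _ ≤ _ := by gcongr
      have : s * s ≤ ((1 + δ) * ‖v‖ ^ 2) * s := by linarith
      exact le_of_mul_le_mul_right this h
  -- energies
  have hen : (inner ℂ v (H v)).re = γ * ‖v‖ ^ 2 := by
    rw [hv, inner_smul_right, Complex.re_ofReal_mul, ← @inner_self_eq_norm_sq ℂ]; rfl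
  have gen : ∀ X : ι → Prop, (∀ v, c * (inner ℂ v ((∑ e ∈ F.filter X, P e) v)).re
      ≤ ‖(∑ e ∈ F.filter X, P e) v‖ ^ 2) →
      c * ‖v - (LinearMap.ker ((∑ e ∈ F.filter X, P e : E →L[ℂ] E) :
        E →ₗ[ℂ] E)).starProjection v‖ ^ 2 ≤ γ * ‖v‖ ^ 2 := by
    intro X h
    set U := LinearMap.ker ((∑ e ∈ F.filter X, P e : E →L[ℂ] E) : E →ₗ[ℂ] E) with hU
    have q1 := gap_on_orth (sum_sa hP (F.filter X)) (sum_pos' hP _) h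
      (v - U.starProjection v) (by
        intro u hu
        exact (Submodule.mem_orthogonal _ _).mp (U.sub_starProjection_mem_orthogonal v) u hu)
    refine q1.trans ?_
    rw [sum_energy hP, ← hen, sum_energy hP]
    refine le_trans (le_of_eq ?_) (Finset.sum_le_sum_of_subset_of_nonneg
      (Finset.filter_subset X F) (fun e _ _ => by positivity))
    refine Finset.sum_congr rfl fun e he => ?_
    have : U.starProjection v ∈ U := U.starProjection_apply_mem v
    rw [map_sub, (sum_ker hP _ _).mp this e he, sub_zero]
  have g1 := gen X1 h1
  have g2 := gen X2 h2
  change c * ‖v - a‖ ^ 2 ≤ _ at g1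
  change c * ‖v - b‖ ^ 2 ≤ _ at g2
  rw [hva] at g1
  rw [hvb] at g2
  have hvpos : 0 < ‖v‖ ^ 2 := by positivity
  rcases le_or_gt c 0 with hc0 | hc0
  · have : 0 ≤ (g : ℝ) ^ 2 / (m : ℝ) ^ 2 := by positivity
    linarith
  have hfin : c * (1 - δ) ≤ 2 * γ := by
    have : c * (1 - δ) * ‖v‖ ^ 2 ≤ 2 * γ * ‖v‖ ^ 2 := by nlinarith
    exact le_of_mul_le_mul_right this hvpos
  have hgy : (g : ℝ) ^ 2 = γ / y := by rw [hy]; field_simp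
  rw [hgy]
  have e5 : 1 - δ = 2 * (m : ℝ) ^ 2 * y / (1 + 2 * (m : ℝ) ^ 2 * y) := by
    rw [hδ]; field_simp; ring
  rw [e5, mul_div_assoc', div_le_iff₀ (by positivity)] at hfin
  have e6 : 2 * γ + γ / y / (m : ℝ) ^ 2 = 2 * γ * (1 + 2 * (m : ℝ) ^ 2 * y)
      / (2 * (m : ℝ) ^ 2 * y) := by
    field_simp; ring
  rw [e6, le_div_iff₀ (by positivity)]
  exact hfin

end Cone

lemma cover_exists (n t M : ℕ) (ht : 0 < t) (hM : 4 * (M + 1) ≤ t) (hn : 5 * t < n) :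
    ∃ (k : ℕ) (α : ℕ → ℕ), α 0 = 0 ∧ α k + t = n ∧
      (∀ i, α (i + 1) + M + 1 ≤ α i + t) ∧ (∀ i j, i + 2 ≤ j → α i + t ≤ α j) ∧
      Monotone α := by
  obtain ⟨W, hW⟩ : ∃ W, n = W + t := ⟨n - t, by omega⟩
  obtain ⟨s, hs⟩ : ∃ s, t = s + (M + 1) := ⟨t - (M + 1), by omega⟩
  set k := 2 * W / t with hk
  have hk1 : k * t ≤ 2 * W := Nat.div_mul_le_self _ _
  have hk2 : 2 * W < (k + 1) * t := by
    have := Nat.lt_div_mul_add (a := 2 * W) ht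
    rw [← hk] at this; linarith
  have hkpos : 0 < k := Nat.div_pos (by omega) ht
  have hWs : W ≤ k * s := by
    have h3 : 3 * t ≤ 4 * s := by omega
    have h4 : 4 * t ≤ W := by omega
    nlinarith
  have hmono : Monotone (fun i => i * W / k) := by
    intro i j hij
    exact Nat.div_le_div_right (Nat.mul_le_mul_right _ hij)
  refine ⟨k, fun i => i * W / k, by simp, ?_, ?_, ?_, hmono⟩
  · simp only [Nat.mul_div_cancel_left _ hkpos]; omega
  · intro i
    have : (i + 1) * W / k ≤ i * W / k + s := by
      rw [← Nat.add_mul_div_left _ _ hkpos]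
      apply Nat.div_le_div_right
      nlinarith
    dsimp only
    omega
  · intro i j hij
    have h1 : i * W / k + t ≤ (i + 2) * W / k := by
      rw [← Nat.add_mul_div_left _ _ hkpos]
      apply Nat.div_le_div_right
      nlinarith
    exact h1.trans (hmono hij)

lemma cell_loc {D : ℕ} {N : Fin D → ℕ} (S : LatticeSetup D N E) (s : Fin D) (e e' : Cell D N)
    (h : ¬ ((e.1 s : ℕ) ≤ e'.1 s + 1 ∧ (e'.1 s : ℕ) ≤ e.1 s + 1)) :
    Commute (S.P e) (S.P e') := by
  apply S.locality
  rw [Finset.disjoint_left]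
  intro x hx hx'
  simp only [cellVerts, Finset.mem_filter, Finset.mem_univ, true_and] at hx hx'
  apply h
  have h1 := hx s
  have h2 := hx' s
  have h3 : (x s : ℕ) = e.1 s ∨ (x s : ℕ) = e.1 s + 1 := h1.imp (congrArg Fin.val) id
  have h4 : (x s : ℕ) = e'.1 s ∨ (x s : ℕ) = e'.1 s + 1 := h2.imp (congrArg Fin.val) id
  omega

open Classical in
lemma conc_step {D : ℕ} {N : Fin D → ℕ} (S : LatticeSetup D N E) (hg : 0 < S.g) (hL : 0 < S.L)
    (a τ : Fin D → ℕ) (s : Fin D) (t : ℕ) (ht : 256 * S.L < t) (hn : 5 * t < τ s) (c : ℝ)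
    (hc : ∀ α, α + t ≤ τ s → c ≤ minNonzeroEig
      (S.Hrect (Function.update a s (a s + α)) (Function.update τ s t))) :
    c ≤ 2 * minNonzeroEig (S.Hrect a τ) + 400 * (S.L : ℝ) ^ 2 * (S.g : ℝ) ^ 2 / (t : ℝ) ^ 2 := by
  set F := Finset.univ.filter (fun e : Cell D N => LatticeSetup.cellInRect a τ e) with hF
  have hFH : S.Hrect a τ = ∑ e ∈ F, S.P e := rfl
  have hrest : 0 ≤ 400 * (S.L : ℝ) ^ 2 * (S.g : ℝ) ^ 2 / (t : ℝ) ^ 2 := by positivity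
  have hmemF : ∀ e, e ∈ F ↔ LatticeSetup.cellInRect a τ e := by intro e; simp [hF]
  set x : Cell D N → ℕ := fun e => (e.1 s : ℕ) - a s with hx
  have hsub : ∀ α, α + t ≤ τ s →
      S.Hrect (Function.update a s (a s + α)) (Function.update τ s t)
      = ∑ e ∈ F.filter (fun e => α ≤ x e ∧ x e + 2 ≤ α + t), S.P e := by
    intro α hα
    unfold LatticeSetup.Hrect
    refine Finset.sum_congr ?_ fun _ _ => rfl
    ext e
    rw [Finset.mem_filter, Finset.mem_filter, hmemF]
    simp only [Finset.mem_univ, true_and, LatticeSetup.cellInRect, hx]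
    constructor
    · intro h
      have hs := h s
      simp only [Function.update_self] at hs
      refine ⟨fun q => ?_, by omega, by omega⟩
      by_cases hq : q = s
      · subst hq; omega
      · have := h q
        simpa [Function.update_of_ne hq] using this
    · rintro ⟨h, h1, h2⟩ q
      have hs := h s
      by_cases hq : q = s
      · subst hq; simp only [Function.update_self]; omega
      · simpa [Function.update_of_ne hq] using h q
  by_cases hne : S.Hrect a τ = 0
  · rw [hne, minEig_zero]
    have h0 := hc 0 (by omega)
    rw [hsub 0 (by omega)] at h0
    have hz : ∑ e ∈ F.filter (fun e => 0 ≤ x e ∧ x e + 2 ≤ 0 + t), S.P e = 0 := by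
      refine Finset.sum_eq_zero fun e he => ?_
      ext v
      have hv : (∑ e ∈ F, S.P e) v = 0 := by rw [← hFH, hne]; rfl
      exact (sum_ker S.proj F v).mp hv e (Finset.mem_filter.mp he).1
    rw [hz, minEig_zero] at h0
    linarith
  set m := t / (16 * S.L) with hm
  have hLpos : 0 < 16 * S.L := by omega
  have hm1 : 16 * S.L * m ≤ t := Nat.mul_div_le _ _
  have hm2 : t < 16 * S.L * (m + 1) := Nat.lt_mul_div_succ _ hLpos
  have hmpos : 0 < m := Nat.div_pos (by omega) hLpos
  obtain ⟨k, α, hα0, hαk, hstep, hsep, hmono⟩ := cover_exists (τ s) t (2 * S.L * m) (by omega)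
    (by nlinarith) hn
  have hαval : ∀ i ≤ k, α i + t ≤ τ s := by
    intro i hi; have := hmono hi; omega
  have hloc : ∀ e ∈ F, ∀ e' ∈ F, ¬ (x e ≤ x e' + 1 ∧ x e' ≤ x e + 1) →
      Commute (S.P e) (S.P e') := by
    intro e he e' he' h
    apply cell_loc S s
    have h1 := (hmemF e).mp he s
    have h2 := (hmemF e').mp he' s
    simp only [hx] at h
    omega
  have hgb : ∀ i ∈ F, (F.filter (fun j => ¬ Commute (S.P i) (S.P j))).card ≤ S.g := by
    intro i _
    refine le_trans ?_ (S.gbound i)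
    rw [Nat.card_eq_fintype_card, Fintype.card_subtype]
    apply Finset.card_le_card
    intro j hj
    have hj2 := (Finset.mem_filter.mp hj).2
    refine Finset.mem_filter.mpr ⟨Finset.mem_univ _, ?_, hj2⟩
    rintro rfl
    exact hj2 (Commute.refl _)
  set X : (ℕ → Prop) → Cell D N → Prop :=
    fun q e => ∃ i ≤ k, q i ∧ α i ≤ x e ∧ x e + 2 ≤ α i + t with hXdef
  have hgap : ∀ (q : ℕ → Prop) (Y : Cell D N → Prop), Y = X q →
      (∀ i j, q i → q j → i < j → i + 2 ≤ j) →
      ∀ v, c * (inner ℂ v ((∑ e ∈ F.filter Y, S.P e) v)).re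
        ≤ ‖(∑ e ∈ F.filter Y, S.P e) v‖ ^ 2 := by
    intro q Y hY hq v
    set I := (Finset.range (k + 1)).filter q with hI
    set B : ℕ → Finset (Cell D N) :=
      fun i => F.filter (fun e => α i ≤ x e ∧ x e + 2 ≤ α i + t) with hB
    have hsepB : ∀ i ∈ I, ∀ j ∈ I, i ≠ j → ∀ e ∈ B i, ∀ f ∈ B j,
        ¬ (x e ≤ x f + 1 ∧ x f ≤ x e + 1) := by
      intro i hi j hj hij e he f hf
      have hi' := (Finset.mem_filter.mp hi).2
      have hj' := (Finset.mem_filter.mp hj).2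
      have he' := (Finset.mem_filter.mp he).2
      have hf' := (Finset.mem_filter.mp hf).2
      rcases lt_or_gt_of_ne hij with h | h
      · have := hsep i j (hq i j hi' hj' h); omega
      · have := hsep j i (hq j i hj' hi' h); omega
    have hU : F.filter Y = I.biUnion B := by
      ext e
      simp only [Finset.mem_filter, Finset.mem_biUnion, hY, hI, hB, hXdef, Finset.mem_range,
        Nat.lt_succ_iff]
      constructor
      · rintro ⟨h1, i, h2, h3, h4⟩; exact ⟨i, ⟨h2, h3⟩, h1, h4⟩
      · rintro ⟨i, ⟨h2, h3⟩, h1, h4⟩; exact ⟨h1, i, h2, h3, h4⟩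
    rw [hU, Finset.sum_biUnion]
    · apply group_gap S.proj I B
      · intro i hi j hj hij e he f hf
        exact hloc e (Finset.mem_filter.mp he).1 f (Finset.mem_filter.mp hf).1
          (hsepB i hi j hj hij e he f hf)
      · intro i hi v
        have hik : i ≤ k := by
          have := (Finset.mem_filter.mp hi).1; simpa [Nat.lt_succ_iff] using this
        have h5 := hc (α i) (hαval i hik)
        rw [hsub _ (hαval i hik)] at h5
        have h6 := minEig_mul_le (sum_sa S.proj (B i)) (sum_pos' S.proj (B i)) v
        refine le_trans ?_ h6
        exact mul_le_mul_of_nonneg_right h5 (sum_pos' S.proj (B i) v)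
    · intro i hi j hj hij
      show Disjoint (B i) (B j)
      rw [Finset.disjoint_left]
      intro e he hf
      exact hsepB i hi j hj hij e he e hf (by omega)
  have hcov : ∀ e ∈ F, ∃ i ≤ k, α i ≤ x e ∧ x e + 2 ≤ α i + t := by
    intro e he
    have h1 := (hmemF e).mp he s
    set i := Nat.findGreatest (fun i => α i ≤ x e) k with hi
    have hik : i ≤ k := Nat.findGreatest_le k
    have hPi : α i ≤ x e :=
      Nat.findGreatest_spec (P := fun i => α i ≤ x e) (m := 0) (Nat.zero_le k) (by simp [hα0])
    refine ⟨i, hik, hPi, ?_⟩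
    rcases hik.eq_or_lt with h | h
    · rw [h, hαk]; simp only [hx]; omega
    · have := Nat.findGreatest_is_greatest (P := fun i => α i ≤ x e) (n := k)
        (k := i + 1) (by omega) (by omega)
      have := hstep i
      omega
  have hnear : ∀ e ∈ F, nearOut F x (X Even) (2 * S.L * m) e → X Odd e := by
    rintro e' he' ⟨e, he, hXe, h1, h2⟩
    obtain ⟨i, hik, h3, h4⟩ := hcov e he
    have hodd : Odd i := by
      rw [← Nat.not_even_iff_odd]
      intro hev
      exact hXe ⟨i, hik, hev, h3, h4⟩
    have h5 := (hmemF e').mp he' s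
    refine ⟨i, hik, hodd, ?_, ?_⟩
    · obtain ⟨r, hr⟩ := hodd
      have h6 : ¬ (α (2 * r) ≤ x e ∧ x e + 2 ≤ α (2 * r) + t) :=
        fun h => hXe ⟨2 * r, by omega, even_two_mul r, h⟩
      have h7 := hstep (2 * r)
      have h8 : α (2 * r) ≤ α i := hmono (by omega)
      subst hr
      omega
    · rcases hik.eq_or_lt with h | h
      · rw [h, hαk]; simp only [hx]; omega
      · have h6 : ¬ (α (i + 1) ≤ x e ∧ x e + 2 ≤ α (i + 1) + t) :=
          fun h' => hXe ⟨i + 1, by omega, hodd.add_one, h'⟩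
        have h7 := hstep i
        have h8 : α i ≤ α (i + 1) := hmono (by omega)
        omega
  have hmain := abs_step S.proj F x (X Even) (X Odd) S.g S.L m hg hmpos S.layer S.layers hgb hloc
    hnear c
    (hgap Even _ rfl (by rintro i j ⟨p, hp⟩ ⟨q, hq⟩ h; omega))
    (hgap Odd _ rfl (by rintro i j ⟨p, hp⟩ ⟨q, hq⟩ h; omega))
    (by rw [← hFH]; exact hne)
  rw [← hFH] at hmain
  refine hmain.trans ?_
  have hmR : (0 : ℝ) < m := by exact_mod_cast hmpos
  have htR : (0 : ℝ) < t := by exact_mod_cast (by omega : 0 < t)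
  have h20 : (t : ℝ) ≤ 20 * S.L * m := by
    have : t ≤ 20 * S.L * m := by nlinarith
    exact_mod_cast this
  have : (S.g : ℝ) ^ 2 / (m : ℝ) ^ 2 ≤ 400 * (S.L : ℝ) ^ 2 * (S.g : ℝ) ^ 2 / (t : ℝ) ^ 2 := by
    rw [div_le_div_iff₀ (by positivity) (by positivity)]
    have h2 : (t : ℝ) ^ 2 ≤ (20 * S.L * m) ^ 2 := by gcongr
    have h3 : (0 : ℝ) ≤ (S.g : ℝ) ^ 2 := by positivity
    nlinarith
  linarith

lemma localGap_bdd {D : ℕ} {N : Fin D → ℕ} (S : LatticeSetup D N E) (t : Fin D → ℕ) :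
    BddBelow {x : ℝ | ∃ a : Fin D → ℕ, (∀ s, a s + t s ≤ N s) ∧
    x = minNonzeroEig (S.Hrect a t)} := by
  refine ⟨0, ?_⟩
  rintro _ ⟨a, -, rfl⟩
  exact minEig_nonneg _

/-- mixed dimensions: the first `j` directions are cut down to `t` -/
def mixDim {D : ℕ} (N t : Fin D → ℕ) (j : ℕ) : Fin D → ℕ :=
  fun s => if (s : ℕ) < j then t s else N s


/-- for a frustration-free local Hamiltonian on the `D`-dimensional lattice
`[1:n₁]×…×[1:n_D]` as in the setup, with parameters `g, L ≤ (3D)^D`, spectral gap `γ`, and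
local gaps `γ(t₁,…,t_D)`: if `2⁶·4^D·L < t_s < n_s/5` for every `s` and `γ ≤ g²/16^D`,
then `γ(t₁,…,t_D) ≤ 6^D·γ + 200·L²·g²·6^D·(1/min_q t_q²)`. -/
theorem stmt_1 {D : ℕ} (hD : 0 < D) {N : Fin D → ℕ} (S : LatticeSetup D N E)
    (hgD : S.g ≤ (3 * D) ^ D) (hLD : S.L ≤ (3 * D) ^ D)
    (t : Fin D → ℕ)
    (ht1 : ∀ s, 2 ^ 6 * 4 ^ D * S.L < t s) (ht2 : ∀ s, 5 * t s < N s)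
    (hγ : S.gap ≤ (S.g : ℝ) ^ 2 / 16 ^ D) :
    S.localGap t ≤ 6 ^ D * S.gap +
      200 * (S.L : ℝ) ^ 2 * (S.g : ℝ) ^ 2 * 6 ^ D *
        (1 / sInf {x : ℝ | ∃ q : Fin D, x = (t q : ℝ) ^ 2}) := by
  have htpos : ∀ s, 0 < t s := fun s => lt_of_le_of_lt (Nat.zero_le _) (ht1 s)
  have hfull : S.localGap N = S.gap := by
    have hset : {x : ℝ | ∃ a : Fin D → ℕ, (∀ s, a s + N s ≤ N s) ∧
        x = minNonzeroEig (S.Hrect a N)} = {S.gap} := by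
      have hH : S.Hrect (fun _ => 0) N = S.Hfull := by
        unfold LatticeSetup.Hrect LatticeSetup.Hfull
        congr 1
        rw [Finset.filter_eq_self]
        intro e _ s
        have := e.2 s
        show 0 ≤ (e.1 s : ℕ) ∧ (e.1 s : ℕ) + 2 ≤ 0 + N s
        omega
      ext y
      constructor
      · rintro ⟨a, ha, rfl⟩
        have : a = fun _ => 0 := by
          funext s; have := ha s; omega
        rw [this, hH]; rfl
      · intro hy
        refine ⟨fun _ => 0, by simp, ?_⟩
        rw [hH]; exact hy
    unfold LatticeSetup.localGap
    rw [hset, csInf_singleton]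
  have hgap0 : 0 ≤ S.gap := minEig_nonneg _
  set σ := sInf {x : ℝ | ∃ q : Fin D, x = (t q : ℝ) ^ 2} with hσ
  have hσset : {x : ℝ | ∃ q : Fin D, x = (t q : ℝ) ^ 2} = Set.range (fun q => (t q : ℝ) ^ 2) := by
    ext y; constructor
    · rintro ⟨q, rfl⟩; exact ⟨q, rfl⟩
    · rintro ⟨q, rfl⟩; exact ⟨q, rfl⟩
  have hσle : ∀ q, σ ≤ (t q : ℝ) ^ 2 := by
    intro q
    refine csInf_le ⟨0, ?_⟩ ⟨q, rfl⟩
    rintro _ ⟨q, rfl⟩; positivity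
  have hσpos : 0 < σ := by
    have hmem : σ ∈ {x : ℝ | ∃ q : Fin D, x = (t q : ℝ) ^ 2} := by
      apply Set.Nonempty.csInf_mem
      · exact ⟨_, ⟨0, hD⟩, rfl⟩
      · rw [hσset]; exact Set.finite_range _
    obtain ⟨q, hq⟩ := hmem
    rw [hq]
    have : (0 : ℝ) < t q := by exact_mod_cast htpos q
    positivity
  by_cases hg : S.g = 0
  · have hgap : S.gap = 0 := le_antisymm (by simpa [hg] using hγ) hgap0
    have hH0 : S.Hfull = 0 := by
      by_contra hne
      have := (minEig_attained (sum_sa S.proj Finset.univ) (sum_pos' S.proj Finset.univ) hne).1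
      have h2 : S.gap = minNonzeroEig (∑ e, S.P e) := rfl
      linarith
    have hz : S.localGap t ≤ 0 := by
      have hr : S.Hrect (fun _ => 0) t = 0 := by
        refine Finset.sum_eq_zero fun e _ => ?_
        ext v
        have hv : (∑ e, S.P e) v = 0 := by
          have : (∑ e, S.P e) = 0 := hH0
          rw [this]; rfl
        exact (sum_ker S.proj Finset.univ v).mp hv e (Finset.mem_univ _)
      refine csInf_le (localGap_bdd S t) ⟨fun _ => 0, ?_, ?_⟩
      · intro s; have := ht2 s; show 0 + t s ≤ N s; omega
      · rw [hr, minEig_zero]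
    refine hz.trans ?_
    positivity
  have hgpos : 0 < S.g := Nat.pos_of_ne_zero hg
  have hLpos : 0 < S.L := by
    have e : Cell D N := ⟨fun s => ⟨0, by have := ht2 s; omega⟩, fun s => by
      have := ht2 s; have := htpos s; simp only; omega⟩
    exact lt_of_le_of_lt (Nat.zero_le _) (S.layer e).2
  set A : ℝ := 400 * (S.L : ℝ) ^ 2 * (S.g : ℝ) ^ 2 / σ with hA
  have hA0 : 0 ≤ A := by positivity
  have hstep : ∀ j, j < D → S.localGap (mixDim N t (j + 1)) ≤ 2 * S.localGap (mixDim N t j) + A := by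
    intro j hj
    set s : Fin D := ⟨j, hj⟩ with hs
    have hupd : Function.update (mixDim N t j) s (t s) = mixDim N t (j + 1) := by
      funext q
      by_cases hq : q = s
      · subst hq; simp [mixDim, hs]
      · rw [Function.update_of_ne hq]
        have : (q : ℕ) ≠ j := fun h => hq (Fin.ext h)
        have h3 : (q : ℕ) < j ↔ (q : ℕ) < j + 1 := by omega
        simp only [mixDim, h3]
    have hms : mixDim N t j s = N s := by simp [mixDim, hs]
    have key : ∀ a : Fin D → ℕ, (∀ q, a q + mixDim N t j q ≤ N q) →
        S.localGap (mixDim N t (j + 1)) ≤ 2 * minNonzeroEig (S.Hrect a (mixDim N t j)) + A := by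
      intro a ha
      have h256 : 256 * S.L < t s := by
        refine lt_of_le_of_lt ?_ (ht1 s)
        have : 4 ^ 1 ≤ 4 ^ D := Nat.pow_le_pow_right (by norm_num) hD
        apply Nat.mul_le_mul_right
        omega
      have h := conc_step S hgpos hLpos a (mixDim N t j) s (t s) h256 (by rw [hms]; exact ht2 s)
        (S.localGap (mixDim N t (j + 1))) (by
          intro α hα
          rw [hupd]
          refine csInf_le (localGap_bdd S _) ⟨_, ?_, rfl⟩
          intro q
          rw [← hupd]
          have hq' := ha q
          by_cases hq : q = s
          · subst hq
            simp only [Function.update_self]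
            have := ha s
            omega
          · rw [Function.update_of_ne hq, Function.update_of_ne hq]; exact hq')
      refine h.trans ?_
      have : 400 * (S.L : ℝ) ^ 2 * (S.g : ℝ) ^ 2 / (t s : ℝ) ^ 2 ≤ A := by
        rw [hA]
        have := hσle s
        gcongr
      linarith
    have : (S.localGap (mixDim N t (j + 1)) - A) / 2 ≤ S.localGap (mixDim N t j) := by
      apply le_csInf
      · refine ⟨_, fun _ => 0, ?_, rfl⟩
        intro q
        have := ht2 q
        simp only [mixDim]; split_ifs <;> omega
      · rintro _ ⟨a, ha, rfl⟩
        have := key a ha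
        linarith
    linarith
  have hind : ∀ j, j ≤ D → S.localGap (mixDim N t j) ≤ 2 ^ j * S.gap + A * (2 ^ j - 1) := by
    intro j
    induction j with
    | zero =>
      intro _
      have : mixDim N t 0 = N := by funext s; simp [mixDim]
      rw [this, hfull]; simp
    | succ j ih =>
      intro hj
      have h1 := ih (by omega)
      have h2 := hstep j (by omega)
      rw [pow_succ]
      linarith
  have hfinal := hind D le_rfl
  have hmix : mixDim N t D = t := by funext s; simp [mixDim]
  rw [hmix] at hfinal
  refine hfinal.trans ?_
  have hp1 : (2 : ℝ) ^ D ≤ 6 ^ D := by gcongr; norm_num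
  have hp2 : 2 * ((2 : ℝ) ^ D - 1) ≤ 6 ^ D := by
    have h3 : (3 : ℝ) ^ 1 ≤ 3 ^ D := pow_le_pow_right₀ (by norm_num) hD
    have h4 : (6 : ℝ) ^ D = 3 ^ D * 2 ^ D := by rw [← mul_pow]; norm_num
    have h5 : (0 : ℝ) < 2 ^ D := by positivity
    rw [h4]; nlinarith
  have e1 : 200 * (S.L : ℝ) ^ 2 * (S.g : ℝ) ^ 2 * 6 ^ D * (1 / σ) = A / 2 * 6 ^ D := by
    rw [hA]; field_simp; ring
  rw [e1]
  have i1 : 2 ^ D * S.gap ≤ 6 ^ D * S.gap := by gcongr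
  have i2 : A * (2 ^ D - 1) ≤ A / 2 * 6 ^ D := by nlinarith
  linarith
end

section
/- Fix ν ∈ (0, 1/4] and a real number m > 0. Then the polynomial step_{m,ν} satisfies step_{m,ν}(1) = 1, and |step_{m,ν}(x)| ≤ 1/(1 + m²ν/(2(1−ν))) for all x ∈ (0, 1−ν). -/
/-- The polynomial `step_{m,ν}(x) = T_⌈m⌉(−1 + 2x/(1−ν)) / T_⌈m⌉((1+ν)/(1−ν))`,
where `T_k` is the Chebyshev polynomial of the first kind. -/
noncomputable def stepPoly (m ν : ℝ) (x : ℝ) : ℝ :=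
  (Polynomial.Chebyshev.T ℝ ⌈m⌉).eval (-1 + 2 * x / (1 - ν)) /
    (Polynomial.Chebyshev.T ℝ ⌈m⌉).eval ((1 + ν) / (1 - ν))

theorem T_lower (d : ℝ) (hd : 0 ≤ d) (n : ℕ) :
    1 + (n : ℝ) ^ 2 * d ≤ (Polynomial.Chebyshev.T ℝ (n : ℤ)).eval (1 + d) ∧
    (2 * (n : ℝ) + 1) * d ≤ (Polynomial.Chebyshev.T ℝ ((n : ℤ) + 1)).eval (1 + d) -
      (Polynomial.Chebyshev.T ℝ (n : ℤ)).eval (1 + d) := by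
  induction n with
  | zero => simp
  | succ k ih =>
    obtain ⟨h1, h2⟩ := ih
    have h3 : (Polynomial.Chebyshev.T ℝ ((k : ℤ) + 2)).eval (1 + d) =
        2 * (1 + d) * (Polynomial.Chebyshev.T ℝ ((k : ℤ) + 1)).eval (1 + d) -
          (Polynomial.Chebyshev.T ℝ (k : ℤ)).eval (1 + d) := by
      rw [Polynomial.Chebyshev.T_add_two]; simp
    have h4 := Polynomial.Chebyshev.one_le_eval_T_real ((k : ℤ) + 1) (x := 1 + d) (by linarith)
    push_cast
    rw [show (k : ℤ) + 1 + 1 = k + 2 by ring, h3]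
    constructor <;> nlinarith [mul_le_mul_of_nonneg_left h4 hd]

theorem stmt_2 (ν : ℝ) (hν : ν ∈ Set.Ioc (0 : ℝ) (1 / 4)) (m : ℝ) (hm : 0 < m) :
    stepPoly m ν 1 = 1 ∧
      ∀ x ∈ Set.Ioo (0 : ℝ) (1 - ν),
        |stepPoly m ν x| ≤ 1 / (1 + m ^ 2 * ν / (2 * (1 - ν))) := by
  obtain ⟨h0, h1⟩ := hν
  have hp : 0 < 1 - ν := by linarith
  have hu : 0 < ν / (1 - ν) := by positivity
  have e1 : (1 + ν) / (1 - ν) = 1 + 2 * (ν / (1 - ν)) := by field_simp; ring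
  have e2 : -1 + 2 * 1 / (1 - ν) = (1 + ν) / (1 - ν) := by field_simp; ring
  have e3 : m ^ 2 * ν / (2 * (1 - ν)) = m ^ 2 * (ν / (1 - ν)) / 2 := by field_simp
  obtain ⟨n, hn⟩ := Int.eq_ofNat_of_zero_le (Int.ceil_pos.mpr hm).le
  have hmn : m ≤ n := by
    have := Int.le_ceil m
    rw [hn] at this; exact_mod_cast this
  have hT := (T_lower (2 * (ν / (1 - ν))) (by positivity) n).1
  rw [← e1] at hT
  have hsq : m ^ 2 ≤ (n : ℝ) ^ 2 := by gcongr
  have hD : 1 + m ^ 2 * ν / (2 * (1 - ν)) ≤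
      (Polynomial.Chebyshev.T ℝ (n : ℤ)).eval ((1 + ν) / (1 - ν)) := by
    rw [e3]
    nlinarith [mul_le_mul_of_nonneg_right hsq hu.le, mul_nonneg (sq_nonneg m) hu.le]
  have hpos : 0 < 1 + m ^ 2 * ν / (2 * (1 - ν)) := by positivity
  unfold stepPoly
  rw [hn]
  constructor
  · rw [e2]; exact div_self (hpos.trans_le hD).ne'
  · rintro x ⟨hx0, hx1⟩
    rw [abs_div, abs_of_pos (hpos.trans_le hD)]
    have hx : |-1 + 2 * x / (1 - ν)| ≤ 1 := by
      have a : 0 ≤ 2 * x / (1 - ν) := by positivity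
      have b : 2 * x / (1 - ν) ≤ 2 := by rw [div_le_iff₀ hp]; linarith
      rw [abs_le]; constructor <;> linarith
    have := Polynomial.Chebyshev.abs_eval_T_real_le_one (n : ℤ) hx
    gcongr
end

section
/- Fix ν ∈ (0, 1/4] and a real number m > 0. Then T_⌈m⌉((1+ν)/(1−ν)) ≥ 1 + m²ν/(2(1−ν)). -/
theorem cheb_aux (d : ℝ) (hd : 0 ≤ d) (n : ℕ) :
    1 + (n : ℝ) ^ 2 * d ≤ (Polynomial.Chebyshev.T ℝ n).eval (1 + d) ∧
    (2 * (n : ℝ) + 1) * d ≤ (Polynomial.Chebyshev.T ℝ (n + 1)).eval (1 + d)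
      - (Polynomial.Chebyshev.T ℝ n).eval (1 + d) := by
  induction n with
  | zero => simp
  | succ k ih =>
    obtain ⟨h1, h2⟩ := ih
    have h3 : 1 + ((k : ℝ) + 1) ^ 2 * d
        ≤ (Polynomial.Chebyshev.T ℝ (k + 1)).eval (1 + d) := by linarith
    have h4 : (Polynomial.Chebyshev.T ℝ ((k : ℤ) + 1 + 1)).eval (1 + d)
        = 2 * (1 + d) * (Polynomial.Chebyshev.T ℝ (k + 1)).eval (1 + d)
          - (Polynomial.Chebyshev.T ℝ k).eval (1 + d) := by
      rw [show (k : ℤ) + 1 + 1 = k + 2 by ring, Polynomial.Chebyshev.T_add_two]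
      simp
    push_cast
    refine ⟨h3, ?_⟩
    rw [h4]
    have h5 : 1 ≤ (Polynomial.Chebyshev.T ℝ (k + 1)).eval (1 + d) := by
      have : 0 ≤ ((k : ℝ) + 1) ^ 2 * d := by positivity
      linarith
    nlinarith [mul_le_mul_of_nonneg_left h5 hd]

/-- for `ν ∈ (0, 1/4]` and a real `m > 0`,
`T_⌈m⌉((1+ν)/(1−ν)) ≥ 1 + m²ν/(2(1−ν))`, where `T_k` is the Chebyshev polynomial of the
first kind. -/
theorem stmt_3 (ν : ℝ) (hν : ν ∈ Set.Ioc (0 : ℝ) (1 / 4)) (m : ℝ) (hm : 0 < m) :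
    1 + m ^ 2 * ν / (2 * (1 - ν)) ≤ (Polynomial.Chebyshev.T ℝ ⌈m⌉).eval ((1 + ν) / (1 - ν)) := by
  obtain ⟨h0, h1⟩ := hν
  have hpos : 0 < 1 - ν := by linarith
  have hd : 0 ≤ ν / (1 - ν) := by positivity
  obtain ⟨n, hn⟩ := Int.eq_ofNat_of_zero_le (Int.ceil_nonneg hm.le)
  have hmn : m ≤ (n : ℝ) := by
    have := Int.le_ceil m
    rw [hn] at this
    exact_mod_cast this
  have hx : (1 + ν) / (1 - ν) = 1 + 2 * (ν / (1 - ν)) := by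
    field_simp
    ring
  have hl : m ^ 2 * ν / (2 * (1 - ν)) = m ^ 2 * (ν / (1 - ν)) / 2 := by
    field_simp
  rw [hn, hx, hl]
  have hsq : m ^ 2 ≤ (n : ℝ) ^ 2 := by gcongr
  have := (cheb_aux (2 * (ν / (1 - ν))) (by positivity) n).1
  have h2 := mul_le_mul_of_nonneg_right hsq hd
  have h3 : 0 ≤ m ^ 2 * (ν / (1 - ν)) := by positivity
  refine le_trans ?_ this
  linarith
end

section
/- Let a, b ∈ ℂ satisfy |a|² + |b|² = 1, and let 0 ≤ ν ≤ (3−√5)/2. Then the 2×2 Hermitian matrix [[1+|a|², a·conj(b)], [conj(a)·b, |b|²]] is bounded above in the Loewner (positive-semidefinite) order by the diagonal matrix [[2 − ν|b|², 0], [0, 2 − ν]]. -/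
open scoped ComplexOrder

/-- for `a b : ℂ` with `|a|² + |b|² = 1` and `0 ≤ ν ≤ (3−√5)/2`, the Hermitian
matrix `[[1+|a|², a·conj b],[conj a·b, |b|²]]` is bounded above, in the Loewner order, by the
diagonal matrix `[[2 − ν|b|², 0],[0, 2 − ν]]`. -/
theorem stmt_8 (a b : ℂ) (hab : ‖a‖ ^ 2 + ‖b‖ ^ 2 = 1) (ν : ℝ) (hν0 : 0 ≤ ν)
    (hν1 : ν ≤ (3 - Real.sqrt 5) / 2) :
    (!![((2 - ν * ‖b‖ ^ 2 : ℝ) : ℂ), 0; 0, ((2 - ν : ℝ) : ℂ)] -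
      !![((1 + ‖a‖ ^ 2 : ℝ) : ℂ), a * (starRingEnd ℂ) b;
         (starRingEnd ℂ) a * b, ((‖b‖ ^ 2 : ℝ) : ℂ)]).PosSemidef := by
  have h5 : (2:ℝ) < Real.sqrt 5 := by
    rw [Real.lt_sqrt (by norm_num)]; norm_num
  have h5' : Real.sqrt 5 ^ 2 = 5 := Real.sq_sqrt (by norm_num)
  have hk : 0 < 1 - ν := by linarith
  have hq : 0 ≤ ν ^ 2 - 3 * ν + 1 := by nlinarith
  have hc : 0 ≤ (2 - ν - ‖b‖ ^ 2) - ‖a‖ ^ 2 / (1 - ν) := by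
    rw [sub_nonneg, div_le_iff₀ hk]
    nlinarith [mul_nonneg hν0 (sq_nonneg ‖b‖)]
  have hkC : ((1 : ℂ) - ν) ≠ 0 := by exact_mod_cast hk.ne'
  have ha : a * (starRingEnd ℂ) a = ((‖a‖ : ℂ)) ^ 2 := Complex.mul_conj' a
  have hb : b * (starRingEnd ℂ) b = ((‖b‖ : ℂ)) ^ 2 := Complex.mul_conj' b
  have habC : (‖a‖ : ℂ) ^ 2 + (‖b‖ : ℂ) ^ 2 = 1 := by exact_mod_cast hab
  have h1 := (Matrix.posSemidef_vecMulVec_self_star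
    (![((1 - ν : ℝ) : ℂ) * (starRingEnd ℂ) b, -(starRingEnd ℂ) a])).smul
    (show (0 : ℝ) ≤ (1 - ν)⁻¹ by positivity)
  have h2 : (Matrix.diagonal ![(0 : ℂ),
      (((2 - ν - ‖b‖ ^ 2) - ‖a‖ ^ 2 / (1 - ν) : ℝ) : ℂ)]).PosSemidef := by
    rw [Matrix.posSemidef_diagonal_iff]
    intro i
    fin_cases i
    · simp
    · exact Complex.zero_le_real.mpr hc
  convert h1.add h2 using 1
  ext i j
  rw [Matrix.add_apply, Matrix.smul_apply, Matrix.vecMulVec_apply, Complex.real_smul]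
  fin_cases i <;> fin_cases j <;>
    simp <;> field_simp
  · linear_combination (-(1 - (ν : ℂ))) * hb - habC
  · linear_combination -ha
end
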